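/- Let p be a prime number and A a nontrivial commutative ring with an element d ∈ A, together with a ring homomorphism f : ℤ_p⟦T⟧ → A from the power series ring over the p-adic integers satisfying f(T) = d. Assume A is complete and separated for the (p,d)-adic topology (i.e. IsAdicComplete holds for the ideal generated by p and d). Then the pair (p, d) is a regular sequence on A if and only if A, regarded as a ℤ_p⟦T⟧-module via f, is flat. -/

import Mathlib

open TensorProduct in
/-- `Tor₁(N, M) = 0`, phrased elementarily. -/
def TorVan (R : Type) [CommRing R] (M : Type) [AddCommGroup M] [Module R M]
    (N : Type) [AddCommGroup N] [Module R N] : Prop :=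
  ∀ (K F : Type) [AddCommGroup K] [AddCommGroup F] [Module R K] [Module R F]
    (i : K →ₗ[R] F) (φ : F →ₗ[R] N), Function.Injective i → Function.Surjective φ →
    Function.Exact i φ → Function.Injective (i.rTensor M)

theorem TorVan.of_subsingleton (R : Type) [CommRing R] (M : Type) [AddCommGroup M] [Module R M]
    (N : Type) [AddCommGroup N] [Module R N] [Subsingleton N] : TorVan R M N := by
  intro K F _ _ _ _ i φ hi hφ hex
  have hs : Function.Surjective i := fun y => (hex y).1 (Subsingleton.elim _ _)
  have : i = (LinearEquiv.ofBijective i ⟨hi, hs⟩ : K →ₗ[R] F) := rfl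
  rw [this]
  exact ((LinearEquiv.ofBijective i ⟨hi, hs⟩).rTensor M).injective

theorem TorVan.of_exact (R : Type) [CommRing R] (M : Type) [AddCommGroup M] [Module R M]
    (N₁ N₂ N₃ : Type) [AddCommGroup N₁] [Module R N₁] [AddCommGroup N₂] [Module R N₂]
    [AddCommGroup N₃] [Module R N₃] (f : N₁ →ₗ[R] N₂) (g : N₂ →ₗ[R] N₃)
    (hf : Function.Injective f) (hg : Function.Surjective g) (hfg : Function.Exact f g)
    (h₁ : TorVan R M N₁) (h₃ : TorVan R M N₃) : TorVan R M N₂ := by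
  intro K F _ _ _ _ i φ hi hφ hex
  let K' := LinearMap.ker (g ∘ₗ φ)
  have hK' : ∀ x : K', φ x ∈ LinearMap.range f := fun x => (hfg _).1 x.2
  let ψ : K' →ₗ[R] N₁ := (LinearEquiv.ofInjective f hf).symm.toLinearMap ∘ₗ
    (LinearMap.codRestrict (LinearMap.range f) (φ ∘ₗ K'.subtype) hK')
  have hψ : ∀ x : K', f (ψ x) = φ x := by
    intro x
    have := LinearEquiv.apply_symm_apply (LinearEquiv.ofInjective f hf)
      (LinearMap.codRestrict (LinearMap.range f) (φ ∘ₗ K'.subtype) hK' x)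
    exact congrArg Subtype.val this
  have hiK : ∀ k, i k ∈ K' := fun k => by
    have : φ (i k) = 0 := (hex _).2 ⟨k, rfl⟩
    simp [K', this]
  let i' : K →ₗ[R] K' := LinearMap.codRestrict K' i hiK
  have hcomp : i = K'.subtype ∘ₗ i' := rfl
  have a1 : Function.Injective (i'.rTensor M) := by
    refine h₁ K K' i' ψ (fun a b hab => hi (congrArg Subtype.val hab)) ?_ ?_
    · intro n
      obtain ⟨x, hx⟩ := hφ (f n)
      have hx' : x ∈ K' := by
        simp only [K', LinearMap.mem_ker, LinearMap.comp_apply, hx]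
        exact (hfg _).2 ⟨n, rfl⟩
      exact ⟨⟨x, hx'⟩, hf (by rw [hψ]; exact hx)⟩
    · intro x
      constructor
      · intro h
        have : φ x = 0 := by rw [← hψ, h, map_zero]
        obtain ⟨k, hk⟩ := (hex _).1 this
        exact ⟨k, Subtype.ext hk⟩
      · rintro ⟨k, rfl⟩
        apply hf
        rw [hψ, map_zero]
        exact (hex _).2 ⟨k, rfl⟩
  have a2 : Function.Injective (K'.subtype.rTensor M) := by
    refine h₃ K' F K'.subtype (g ∘ₗ φ) Subtype.val_injective (hg.comp hφ) ?_
    exact LinearMap.exact_subtype_ker_map _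
  rw [hcomp, LinearMap.rTensor_comp]
  exact a2.comp a1

theorem TorVan.of_quotient (R : Type) [CommRing R] (M : Type) [AddCommGroup M] [Module R M]
    (N : Type) [AddCommGroup N] [Module R N] (P : Ideal R) (e : N ≃ₗ[R] R ⧸ P)
    (hP : Function.Injective (P.subtype.rTensor M)) : TorVan R M N := by
  intro K F _ _ _ _ i φ hi hφ hex
  obtain ⟨w, hw⟩ := hφ (e.symm (Ideal.Quotient.mk P 1))
  have hmul : ∀ r : R, φ (r • w) = 0 ↔ r ∈ P := by
    intro r
    rw [map_smul, hw, ← map_smul, LinearEquiv.map_eq_zero_iff, ← Ideal.Quotient.eq_zero_iff_mem]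
    simp [Algebra.smul_def]
  have hr : ∀ a : P, (LinearMap.toSpanSingleton R F w ∘ₗ P.subtype) a ∈ LinearMap.range i := by
    intro a
    exact (hex _).1 ((hmul a).2 a.2)
  let κ : P →ₗ[R] K := (LinearEquiv.ofInjective i hi).symm.toLinearMap ∘ₗ
    (LinearMap.codRestrict (LinearMap.range i) _ hr)
  have hκ : ∀ a : P, i (κ a) = (a : R) • w := by
    intro x
    have := LinearEquiv.apply_symm_apply (LinearEquiv.ofInjective i hi)
      (LinearMap.codRestrict (LinearMap.range i) _ hr x)
    exact congrArg Subtype.val this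
  let π : K × R →ₗ[R] F := i.coprod (LinearMap.toSpanSingleton R F w)
  let j : P →ₗ[R] K × R := (-κ).prod P.subtype
  have hπs : Function.Surjective π := by
    intro x
    obtain ⟨r, hr⟩ := Ideal.Quotient.mk_surjective (e (φ x))
    have : φ (x - r • w) = 0 := by
      rw [map_sub, map_smul, hw, sub_eq_zero, ← map_smul, LinearEquiv.eq_symm_apply, ← hr]
      simp [Algebra.smul_def]
    obtain ⟨k, hk⟩ := (hex _).1 this
    exact ⟨(k, r), by simp [π, hk]⟩
  have hjπ : Function.Exact j π := by
    rintro ⟨k, r⟩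
    constructor
    · intro h
      have h' : i k + r • w = 0 := by simpa [π] using h
      have hrP : r ∈ P := by
        rw [← hmul, eq_neg_of_add_eq_zero_right h', map_neg, (hex _).2 ⟨k, rfl⟩, neg_zero]
      refine ⟨⟨r, hrP⟩, ?_⟩
      have : -κ ⟨r, hrP⟩ = k := by
        apply hi
        rw [map_neg, hκ]
        exact (eq_neg_of_add_eq_zero_left h').symm
      simp [j, this]
    · rintro ⟨a, ha⟩
      rw [← ha]
      simp [j, π, hκ]
  have hT := rTensor_exact M hjπ hπs
  rw [injective_iff_map_eq_zero]
  intro x hx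
  have h1 : π.rTensor M ((LinearMap.inl R K R).rTensor M x) = 0 := by
    rw [← LinearMap.comp_apply, ← LinearMap.rTensor_comp]
    simpa [π] using hx
  obtain ⟨z, hz⟩ := (hT _).1 h1
  have h2 : P.subtype.rTensor M z = 0 := by
    have : P.subtype = LinearMap.snd R K R ∘ₗ j := by ext; simp [j]
    rw [this, LinearMap.rTensor_comp, LinearMap.comp_apply, hz, ← LinearMap.comp_apply,
      ← LinearMap.rTensor_comp]
    simp
  have h3 : z = 0 := hP (by rw [h2, map_zero])
  have h4 : x = (LinearMap.fst R K R).rTensor M ((LinearMap.inl R K R).rTensor M x) := by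
    rw [← LinearMap.comp_apply, ← LinearMap.rTensor_comp]
    simp
  rw [h4, ← hz, h3]
  simp

/-- Over a noetherian ring, flatness can be tested on prime ideals. -/
theorem flat_of_prime (R : Type) [CommRing R] [IsNoetherianRing R] (M : Type) [AddCommGroup M]
    [Module R M]
    (h : ∀ P : Ideal R, P.IsPrime → Function.Injective (P.subtype.rTensor M)) :
    Module.Flat R M := by
  have key : ∀ (N : Type) [AddCommGroup N] [Module R N] [Module.Finite R N], TorVan R M N := by
    intro N _ _ hN
    refine IsNoetherianRing.induction_on_isQuotientEquivQuotientPrime R hN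
      (motive := fun N _ _ _ => TorVan R M N) ?_ ?_ ?_
    · intro N _ _ _ _
      exact TorVan.of_subsingleton R M N
    · intro N _ _ _ P e
      exact TorVan.of_quotient R M N P.1 e (h _ P.2)
    · intro N₁ _ _ _ N₂ _ _ _ N₃ _ _ _ f g hf hg hfg h₁ h₃
      exact TorVan.of_exact R M N₁ N₂ N₃ f g hf hg hfg h₁ h₃
  rw [Module.Flat.iff_rTensor_injective']
  intro I
  exact key (R ⧸ I) I R I.subtype I.mkQ Subtype.val_injective (Submodule.mkQ_surjective _)
    (LinearMap.exact_subtype_mkQ I)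

open PowerSeries in
theorem padic_prime_cases (p : ℕ) [Fact p.Prime] (P : Ideal (PowerSeries ℤ_[p])) (hP : P.IsPrime) :
    (∃ g, P = Ideal.span {g}) ∨ P = Ideal.span {(p : PowerSeries ℤ_[p]), X} := by
  by_cases hX : (X : PowerSeries ℤ_[p]) ∈ P
  · have hc : ∀ g ∈ P, C (constantCoeff g) ∈ P := by
      intro g hg
      rw [← sub_eq_iff_eq_add'.mpr g.eq_X_mul_shift_add_const]
      exact sub_mem hg (P.mul_mem_right _ hX)
    by_cases hp : (p : PowerSeries ℤ_[p]) ∈ P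
    · right
      apply le_antisymm
      · intro g hg
        have hd : (p : ℤ_[p]) ∣ constantCoeff g := by
          rw [← PadicInt.norm_lt_one_iff_dvd, ← PadicInt.not_isUnit_iff]
          intro hu
          exact hP.ne_top (P.eq_top_of_isUnit_mem hg (isUnit_iff_constantCoeff.2 hu))
        obtain ⟨c, hcc⟩ := hd
        rw [Ideal.mem_span_pair]
        refine ⟨C c, PowerSeries.mk fun n => coeff (n + 1) g, ?_⟩
        conv_rhs => rw [g.eq_shift_mul_X_add_const, hcc]
        rw [map_mul, map_natCast]; ring
      · rw [Ideal.span_le]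
        rintro x (rfl | rfl)
        · exact hp
        · exact hX
    · left
      refine ⟨X, le_antisymm ?_ ((Ideal.span_singleton_le_iff_mem _).2 hX)⟩
      intro g hg
      rw [Ideal.mem_span_singleton, X_dvd_iff]
      by_contra hne
      have h1 := hc g hg
      rw [PadicInt.unitCoeff_spec hne, map_mul, map_pow, map_natCast] at h1
      rcases hP.mem_or_mem h1 with h | h
      · exact hP.ne_top (P.eq_top_of_isUnit_mem h ((Units.isUnit _).map C))
      · exact hp (hP.mem_of_pow_mem _ h)
  · left
    obtain ⟨a, ha⟩ := (IsPrincipalIdealRing.principal (P.map constantCoeff)).principal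
    obtain ⟨T, hT, -, hcard⟩ := exist_eq_span_eq_ncard_of_X_notMem hX (S := {a})
      ha.symm (Set.finite_singleton a)
    rw [Set.ncard_singleton, Set.ncard_eq_one] at hcard
    obtain ⟨g, rfl⟩ := hcard
    exact ⟨g, hT⟩

open PowerSeries in
theorem padic_not_dvd (p : ℕ) [Fact p.Prime] (g : PowerSeries ℤ_[p])
    (hg : ¬ (p : PowerSeries ℤ_[p]) ∣ g) :
    ∃ (n : ℕ) (a u : PowerSeries ℤ_[p]), IsUnit u ∧ g = (p : PowerSeries ℤ_[p]) * a + X ^ n * u := by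
  classical
  have hex : ∃ n, ¬ (p : ℤ_[p]) ∣ coeff n g := by
    by_contra! h
    choose c hc using h
    apply hg
    refine ⟨PowerSeries.mk c, ?_⟩
    ext n
    rw [← map_natCast (C (R := ℤ_[p])), coeff_C_mul, coeff_mk, hc]
  have hlt : ∀ m, ∃ c, m < Nat.find hex → coeff m g = p * c := by
    intro m
    by_cases hm : m < Nat.find hex
    · obtain ⟨c, hc⟩ := not_not.1 (Nat.find_min hex hm)
      exact ⟨c, fun _ => hc⟩
    · exact ⟨0, fun h => absurd h hm⟩
  choose c hc using hlt
  refine ⟨Nat.find hex, PowerSeries.mk fun m => if m < Nat.find hex then c m else 0,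
    PowerSeries.mk fun m => coeff (m + Nat.find hex) g, ?_, ?_⟩
  · rw [isUnit_iff_constantCoeff, ← coeff_zero_eq_constantCoeff_apply, coeff_mk, zero_add]
    by_contra hu
    rw [PadicInt.not_isUnit_iff, PadicInt.norm_lt_one_iff_dvd] at hu
    exact Nat.find_spec hex hu
  · ext m
    rw [map_add, ← map_natCast (C (R := ℤ_[p])), coeff_C_mul, coeff_mk, coeff_X_pow_mul', coeff_mk]
    by_cases hm : m < Nat.find hex
    · rw [if_pos hm, if_neg (by omega), hc m hm, add_zero]
    · rw [if_neg hm, if_pos (by omega), mul_zero, zero_add, Nat.sub_add_cancel (by omega)]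

open PowerSeries in
theorem natCast_p_prime (p : ℕ) [Fact p.Prime] : ¬ IsUnit (p : PowerSeries ℤ_[p]) := by
  rw [isUnit_iff_constantCoeff, map_natCast]
  exact PadicInt.prime_p.not_isUnit

open PowerSeries in
theorem torsion_free_aux (p : ℕ) [Fact p.Prime] (A : Type) [CommRing A] (d : A)
    (f : PowerSeries ℤ_[p] →+* A) (hf : f X = d)
    (hsep : ∀ x : A, (∀ n : ℕ, (p : A) ^ n ∣ x) → x = 0)
    (h1 : ∀ x : A, (p : A) * x = 0 → x = 0)
    (h2 : ∀ x : A, d * x ∈ Ideal.span {(p : A)} → x ∈ Ideal.span {(p : A)})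
    (g : PowerSeries ℤ_[p]) (hg : g ≠ 0) (x : A) (hx : f g * x = 0) : x = 0 := by
  obtain ⟨g', hgg', hnd⟩ := (FiniteMultiplicity.of_not_isUnit
    (natCast_p_prime p) hg).exists_eq_pow_mul_and_not_dvd
  have hpow : ∀ (n : ℕ) (y : A), (p : A) ^ n * y = 0 → y = 0 := by
    intro n
    induction n with
    | zero => intro y hy; simpa using hy
    | succ n ih => intro y hy; exact ih y (h1 _ (by rw [← hy]; ring))
  have hdpow : ∀ (n : ℕ) (y : A), (p : A) ∣ d ^ n * y → (p : A) ∣ y := by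
    intro n
    induction n with
    | zero => intro y hy; simpa using hy
    | succ n ih =>
      intro y hy
      apply ih
      rw [← Ideal.mem_span_singleton]
      apply h2
      rw [Ideal.mem_span_singleton]
      convert hy using 1
      ring
  have hx' : f g' * x = 0 := by
    rw [hgg', map_mul, map_pow, map_natCast, mul_assoc] at hx
    exact hpow _ _ hx
  obtain ⟨n, a, u, hu, hgu⟩ := padic_not_dvd p g' hnd
  obtain ⟨v, hv⟩ := hu.exists_left_inv
  have hfv : f v * f u = 1 := by rw [← map_mul, hv, map_one]
  have hstep : ∀ y : A, f g' * y = 0 → ∃ z, y = p * z ∧ f g' * z = 0 := by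
    intro y hy
    have hy0 := hy
    rw [hgu, map_add, map_mul, map_mul, map_natCast, map_pow, hf] at hy
    have : (p : A) ∣ y := by
      apply hdpow n
      refine ⟨- f v * (f a * y), ?_⟩
      linear_combination (f v) * hy - (d ^ n * y) * hfv
    obtain ⟨z, rfl⟩ := this
    exact ⟨z, rfl, h1 _ (by rw [← hy0]; ring)⟩
  apply hsep
  intro n
  suffices ∃ z, x = p ^ n * z ∧ f g' * z = 0 by
    obtain ⟨z, hz, -⟩ := this
    exact ⟨z, hz⟩
  induction n with
  | zero => exact ⟨x, by simp, hx'⟩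
  | succ n ih =>
    obtain ⟨z, hz, hz0⟩ := ih
    obtain ⟨w, hw, hw0⟩ := hstep z hz0
    exact ⟨w, by rw [hz, hw]; ring, hw0⟩

open TensorProduct in
theorem span_singleton_inj (R : Type) [CommRing R] (M : Type) [AddCommGroup M] [Module R M]
    (g : R) (h : g ≠ 0 → ∀ x : M, g • x = 0 → x = 0) :
    Function.Injective ((Ideal.span {g}).subtype.rTensor M) := by
  rw [injective_iff_map_eq_zero]
  intro z hz
  let g' : Ideal.span {g} := ⟨g, Ideal.mem_span_singleton_self g⟩
  have hrep : ∀ z : TensorProduct R (Ideal.span {g}) M, ∃ a : M, z = g' ⊗ₜ[R] a := by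
    intro z
    induction z with
    | zero => exact ⟨0, by simp⟩
    | tmul x m =>
      obtain ⟨x, hx⟩ := x
      obtain ⟨c, rfl⟩ := Ideal.mem_span_singleton'.1 hx
      exact ⟨c • m, by rw [← TensorProduct.smul_tmul]; rfl⟩
    | add x y hx hy =>
      obtain ⟨a, rfl⟩ := hx
      obtain ⟨b, rfl⟩ := hy
      exact ⟨a + b, by rw [TensorProduct.tmul_add]⟩
  obtain ⟨a, rfl⟩ := hrep z
  by_cases hg : g = 0
  · have : g' = 0 := Subtype.ext hg
    rw [this, TensorProduct.zero_tmul]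
  · have : a = 0 := by
      apply h hg
      have := congrArg (TensorProduct.lid R M) hz
      simpa [g'] using this
    rw [this, TensorProduct.tmul_zero]

open TensorProduct in
theorem span_pair_inj (R : Type) [CommRing R] (M : Type) [AddCommGroup M] [Module R M]
    (g k : R) (hg : ∀ x : M, g • x = 0 → x = 0)
    (hk : ∀ x y : M, k • x = g • y → ∃ z, x = g • z) :
    Function.Injective ((Ideal.span {g, k}).subtype.rTensor M) := by
  rw [injective_iff_map_eq_zero]
  intro z hz
  let g' : Ideal.span {g, k} := ⟨g, Ideal.subset_span (by simp)⟩
  let k' : Ideal.span {g, k} := ⟨k, Ideal.subset_span (by simp)⟩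
  have hrep : ∀ z : TensorProduct R (Ideal.span {g, k}) M,
      ∃ a b : M, z = g' ⊗ₜ[R] a + k' ⊗ₜ[R] b := by
    intro z
    induction z with
    | zero => exact ⟨0, 0, by simp⟩
    | tmul x m =>
      obtain ⟨x, hx⟩ := x
      obtain ⟨a, b, rfl⟩ := Ideal.mem_span_pair.1 hx
      refine ⟨a • m, b • m, ?_⟩
      rw [← TensorProduct.smul_tmul, ← TensorProduct.smul_tmul, ← TensorProduct.add_tmul]
      rfl
    | add x y hx hy =>
      obtain ⟨a, b, rfl⟩ := hx
      obtain ⟨a', b', rfl⟩ := hy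
      exact ⟨a + a', b + b', by rw [TensorProduct.tmul_add, TensorProduct.tmul_add]; abel⟩
  obtain ⟨a, b, rfl⟩ := hrep z
  have h0 : g • a + k • b = 0 := by
    have := congrArg (TensorProduct.lid R M) hz
    simpa [g', k'] using this
  obtain ⟨c, rfl⟩ := hk b (-a) (by rw [smul_neg]; exact eq_neg_of_add_eq_zero_right h0)
  have ha : a = -(k • c) := by
    rw [← sub_eq_zero, sub_neg_eq_add]
    apply hg
    rw [smul_add, smul_comm g k c]
    exact h0
  have hgk : k • g' = g • k' := Subtype.ext (mul_comm k g)
  rw [ha, TensorProduct.tmul_neg, ← TensorProduct.smul_tmul, ← TensorProduct.smul_tmul, hgk,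
    neg_add_cancel]


/-- **Lemma 2.1 ((2) ⇔ (3))**: for a nontrivial commutative ring `A` with an element `d`,
complete and separated for the `(p, d)`-adic topology and equipped with a ring map
`f : ℤ_p⟦T⟧ → A` sending `T` to `d`, the pair `(p, d)` is a regular sequence on `A`
(i.e. `p` is a nonzerodivisor on `A`, `d` is a nonzerodivisor on `A/pA`, and
`A/(p,d)A ≠ 0`) if and only if `A` is flat as a `ℤ_p⟦T⟧`-module via `f`. -/
theorem stmt_0 (p : ℕ) [Fact p.Prime] (A : Type) [CommRing A] [Nontrivial A] (d : A)
    (f : PowerSeries (PadicInt p) →+* A) (hf : f PowerSeries.X = d)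
    (hcomplete : IsAdicComplete (Ideal.span {(p : A), d}) A) :
    ((∀ x : A, (p : A) * x = 0 → x = 0) ∧
        (∀ x : A, d * x ∈ Ideal.span {(p : A)} → x ∈ Ideal.span {(p : A)}) ∧
        Ideal.span {(p : A), d} ≠ ⊤) ↔
      letI : Module (PowerSeries (PadicInt p)) A := Module.compHom A f
      Module.Flat (PowerSeries (PadicInt p)) A := by
  letI : Module (PowerSeries (PadicInt p)) A := Module.compHom A f
  have hsm : ∀ (r : PowerSeries (PadicInt p)) (a : A), r • a = f r * a := fun _ _ => rfl
  constructor
  · rintro ⟨h1, h2, -⟩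
    show Module.Flat (PowerSeries (PadicInt p)) A
    have hsep : ∀ x : A, (∀ n : ℕ, (p : A) ^ n ∣ x) → x = 0 := by
      intro x hx
      apply hcomplete.toIsHausdorff.haus
      intro n
      rw [SModEq.zero, smul_eq_mul, Ideal.mul_top]
      obtain ⟨c, rfl⟩ := hx n
      exact Ideal.mul_mem_right _ _ (Ideal.pow_mem_pow (Ideal.subset_span (by simp)) n)
    apply flat_of_prime
    intro P hP
    rcases padic_prime_cases p P hP with ⟨g, rfl⟩ | rfl
    · apply span_singleton_inj
      intro hg x hx
      exact torsion_free_aux p A d f hf hsep h1 h2 g hg x hx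
    · apply span_pair_inj
      · intro x hx
        rw [hsm, map_natCast] at hx
        exact h1 x hx
      · intro x y hxy
        rw [hsm, hsm, map_natCast, hf] at hxy
        obtain ⟨z, hz⟩ := Ideal.mem_span_singleton.1
          (h2 x (Ideal.mem_span_singleton.2 ⟨y, hxy⟩))
        exact ⟨z, by rw [hsm, map_natCast, hz]⟩
  · intro hflat
    have hflat' : Module.Flat (PowerSeries (PadicInt p)) A := hflat
    have hp0 : (p : PowerSeries (PadicInt p)) ≠ 0 := by
      intro h
      have := congrArg PowerSeries.constantCoeff h
      rw [map_natCast, map_zero] at this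
      exact PadicInt.prime_p.ne_zero this
    refine ⟨?_, ?_, ?_⟩
    · intro x hx
      obtain ⟨k, a, y, hy, ha⟩ := Module.Flat.isTrivialRelation_of_sum_smul_eq_zero
        (R := PowerSeries (PadicInt p)) (f := fun _ : Fin 1 => (p : PowerSeries (PadicInt p)))
        (x := fun _ : Fin 1 => x) (by
          rw [Fin.sum_univ_one, hsm, map_natCast]; exact hx)
      have hx0 : x = ∑ j, a 0 j • y j := hy 0
      rw [hx0]
      apply Finset.sum_eq_zero
      intro j _
      have := ha j
      rw [Fin.sum_univ_one] at this
      rw [(mul_eq_zero.1 this).resolve_left hp0, zero_smul]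
    · intro x hx
      obtain ⟨w, hw⟩ := Ideal.mem_span_singleton.1 hx
      obtain ⟨k, a, y, hy, ha⟩ := Module.Flat.isTrivialRelation_of_sum_smul_eq_zero
        (R := PowerSeries (PadicInt p)) (f := ![PowerSeries.X, (p : PowerSeries (PadicInt p))])
        (x := ![x, -w]) (by
          rw [Fin.sum_univ_two]
          show PowerSeries.X • x + (p : PowerSeries (PadicInt p)) • (-w) = 0
          rw [hsm, hsm, map_natCast, hf, hw]; ring)
      have hx0 : x = ∑ j, a 0 j • y j := hy 0
      rw [hx0]
      apply Ideal.sum_mem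
      intro j _
      have h3 := ha j
      rw [Fin.sum_univ_two] at h3
      change PowerSeries.X * a 0 j + (p : PowerSeries (PadicInt p)) * a 1 j = 0 at h3
      have hdv : (p : PowerSeries (PadicInt p)) ∣ a 0 j := by
        by_contra hnd
        have : ∀ m, (p : PadicInt p) ∣ PowerSeries.coeff m (a 0 j) := by
          intro m
          have h4 := congrArg (PowerSeries.coeff (m + 1)) h3
          rw [map_add, PowerSeries.coeff_succ_X_mul, ← map_natCast (PowerSeries.C (R := ℤ_[p])),
            PowerSeries.coeff_C_mul, map_zero] at h4
          exact ⟨-PowerSeries.coeff (m + 1) (a 1 j), by linear_combination h4⟩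
        choose c hc using this
        apply hnd
        refine ⟨PowerSeries.mk c, ?_⟩
        ext m
        rw [← map_natCast (PowerSeries.C (R := ℤ_[p])), PowerSeries.coeff_C_mul,
          PowerSeries.coeff_mk, hc]
      obtain ⟨b, hb⟩ := hdv
      rw [hsm, hb, map_mul, map_natCast, Ideal.mem_span_singleton]
      exact ⟨f b * y j, by ring⟩
    · intro htop
      apply one_ne_zero (α := A)
      apply hcomplete.toIsHausdorff.haus
      intro n
      rw [SModEq.zero, htop, Ideal.top_pow]
      simp
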